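/- For every integer k with 0 ≤ k ≤ n, the family {π_{k,r} : 0 ≤ r ≤ ⌊k/2⌋} is a basis of the subspace of M spanned by {e_{k,p} : 0 ≤ p ≤ ⌊k/2⌋}. -/

import Mathlib

/-- Valid basis indices: pairs `(k,p)` of integers with `0 ≤ p` and `2p ≤ k`. -/
def Idx : Type := { x : ℤ × ℤ // 0 ≤ x.2 ∧ 2 * x.2 ≤ x.1 }

/-- The free real vector space on the basis `{e_{k,p} : 0 ≤ 2p ≤ k}`. -/
abbrev M : Type := Idx →₀ ℝ

/-- The basis vector `e_{k,p}`, with the convention that it is `0` for invalid indices. -/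
noncomputable def e (k p : ℤ) : M :=
  if h : 0 ≤ p ∧ 2 * p ≤ k then Finsupp.single ⟨(k, p), h⟩ 1 else 0

/-- `L e_{k,p} = (k - 2p + 1) e_{k+1,p}`. -/
noncomputable def opL : M →ₗ[ℝ] M :=
  Finsupp.lsum ℝ fun v => LinearMap.toSpanSingleton ℝ M
    (((v.1.1 - 2 * v.1.2 + 1 : ℤ) : ℝ) • e (v.1.1 + 1) v.1.2)

/-- `Λ e_{k,p} = (2n - 2p - k + 1) e_{k-1,p} + (k - 2p + 1) e_{k-1,p-1}`. -/
noncomputable def opLam (n : ℕ) : M →ₗ[ℝ] M :=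
  Finsupp.lsum ℝ fun v => LinearMap.toSpanSingleton ℝ M
    ((((2 * (n : ℤ) - 2 * v.1.2 - v.1.1 + 1 : ℤ) : ℝ)) • e (v.1.1 - 1) v.1.2 +
      (((v.1.1 - 2 * v.1.2 + 1 : ℤ) : ℝ)) • e (v.1.1 - 1) (v.1.2 - 1))

/-- `H e_{k,p} = (2k - 2n) e_{k,p}`. -/
noncomputable def opH (n : ℕ) : M →ₗ[ℝ] M :=
  Finsupp.lsum ℝ fun v => LinearMap.toSpanSingleton ℝ M
    (((2 * v.1.1 - 2 * (n : ℤ) : ℤ) : ℝ) • e v.1.1 v.1.2)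

/-- The primitive element
`π_{2r,r} = (-1)^r (2n-4r+1)!! ∑_{i=0}^r (-1)^i ((2r-2i-1)!!/(2n-2r-2i+1)!!) e_{2r,i}`.
(Note `(2r-2i-1)` is truncated natural subtraction, so for `i = r` the numerator is
`0‼ = 1`, matching the convention `(-1)!! = 1`.) -/
noncomputable def piBase (n r : ℕ) : M :=
  ((-1 : ℝ) ^ r * (Nat.doubleFactorial (2 * n - 4 * r + 1) : ℝ)) •
    ∑ i ∈ Finset.range (r + 1),
      ((-1 : ℝ) ^ i * (Nat.doubleFactorial (2 * r - 2 * i - 1) : ℝ) /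
          (Nat.doubleFactorial (2 * n - 2 * r - 2 * i + 1) : ℝ)) •
        e (2 * r : ℤ) (i : ℤ)

/-- `π_{k,r} := L^(k-2r) π_{2r,r}`. -/
noncomputable def piElt (n k r : ℕ) : M := (opL ^ (k - 2 * r)) (piBase n r)

/-!
`L` multiplies `e_{k,p}` by the positive scalar `k - 2p + 1` and fixes `p`. Hence `π_{k,r}` is a
combination of `e_{k,0}, …, e_{k,r}` whose coefficient at `e_{k,r}` is a product of nonzero factors,
so `(π_{k,r})_r` arises from the basis `(e_{k,p})_p` by an invertible triangular change of basis.
-/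

open Set Submodule
open scoped Nat

section Triangular

variable {R V ι : Type*} [Ring R] [AddCommGroup V] [Module R V] {v w : ι → V}

theorem span_range_eq_of_triangular [Preorder ι] [WellFoundedLT ι] {c : ι → R}
    (hc : ∀ i, IsUnit (c i)) (h : ∀ i, w i - c i • v i ∈ span R (v '' Iio i)) :
    span R (range w) = span R (range v) := by
  refine le_antisymm (span_le.2 ?_) (span_le.2 ?_) <;> rintro _ ⟨i, rfl⟩
  · have hdiff : w i - c i • v i ∈ span R (range v) := span_mono (image_subset_range v _) (h i)
    have hlead : c i • v i ∈ span R (range v) := smul_mem _ _ (subset_span (mem_range_self i))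
    exact (sub_mem_iff_left _ hlead).1 hdiff
  · induction i using WellFoundedLT.induction with
    | ind i ih =>
      have hdiff : w i - c i • v i ∈ span R (range w) := span_le.2 (image_subset_iff.2 ih) (h i)
      have hlead : c i • v i ∈ span R (range w) :=
        (sub_mem_iff_right _ (subset_span (mem_range_self i))).1 hdiff
      exact (smul_mem_iff_of_isUnit _ (hc i)).1 hlead

theorem linearIndependent_of_span_range_eq [OrzechProperty R] [Finite ι]
    (hv : LinearIndependent R v) (h : span R (range w) = span R (range v)) :
    LinearIndependent R w := by
  nontriviality R
  cases nonempty_fintype ι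
  rw [linearIndependent_iff_card_eq_finrank_span, Set.finrank] at hv ⊢
  rwa [h]

end Triangular

theorem e_coe (x : Idx) : e x.1.1 x.1.2 = Finsupp.single x 1 :=
  dif_pos x.2

theorem e_of_lt {k p : ℤ} (h : k < 2 * p) : e k p = 0 :=
  dif_neg fun hp => h.not_ge hp.2

theorem e_of_neg {p : ℤ} (k : ℤ) (h : p < 0) : e k p = 0 :=
  dif_neg fun hp => h.not_ge hp.1

theorem linearIndependent_e : LinearIndependent ℝ fun x : Idx => e x.1.1 x.1.2 := by
  simpa only [e_coe] using Finsupp.linearIndependent_single_one ℝ Idx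

theorem linearIndependent_e_fin (k : ℕ) :
    LinearIndependent ℝ fun p : Fin (k / 2 + 1) => e k (p : ℕ) := by
  let idx (p : Fin (k / 2 + 1)) : Idx := ⟨(k, (p : ℕ)), by dsimp only; omega⟩
  have idx_injective : Function.Injective idx := fun p q hpq =>
    Fin.ext (Int.ofNat_inj.1 (congrArg (fun x : Idx => x.1.2) hpq))
  exact linearIndependent_e.comp idx idx_injective

theorem opL_e_coe (x : Idx) :
    opL (e x.1.1 x.1.2) = ((x.1.1 - 2 * x.1.2 + 1 : ℤ) : ℝ) • e (x.1.1 + 1) x.1.2 := by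
  rw [e_coe x]
  exact (Finsupp.lsum_single ℝ _ _ _).trans (one_smul ℝ _)

theorem opL_e (k p : ℤ) : opL (e k p) = ((k - 2 * p + 1 : ℤ) : ℝ) • e (k + 1) p := by
  by_cases hvalid : 0 ≤ p ∧ 2 * p ≤ k
  · exact opL_e_coe ⟨(k, p), hvalid⟩
  rcases lt_or_ge p 0 with hneg | hnonneg
  · rw [e_of_neg k hneg, e_of_neg (k + 1) hneg, map_zero, smul_zero]
  have hlt : k < 2 * p := by omega
  rw [e_of_lt hlt, map_zero]
  -- When `2 * p = k + 1`, `e (k + 1) p` is a genuine basis vector, but its coefficient vanishes.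
  rcases (Int.add_one_le_of_lt hlt).eq_or_lt with heq | hlt_succ
  · rw [show k - 2 * p + 1 = 0 by omega, Int.cast_zero, zero_smul]
  · rw [e_of_lt hlt_succ, smul_zero]

theorem opL_pow_e (m : ℕ) (k p : ℤ) :
    (opL ^ m) (e k p) =
      (ascPochhammer ℝ m).eval ((k - 2 * p + 1 : ℤ) : ℝ) • e (k + m) p := by
  induction m with
  | zero => simp
  | succ m ih =>
    rw [pow_succ', Module.End.mul_apply, ih, map_smul, opL_e, smul_smul, ascPochhammer_succ_eval,
      Nat.cast_succ, ← add_assoc]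
    congr 2
    push_cast
    ring

/-- The coefficient of `e_{k,i}` in `π_{k,r}`, for `i ≤ r` and `2r ≤ k`: the coefficient of
`e_{2r,i}` in `π_{2r,r}`, times the rising factorial by which `L ^ (k - 2r)` scales `e_{2r,i}`. -/
noncomputable def piCoeff (n k r i : ℕ) : ℝ :=
  (-1) ^ r * (2 * n - 4 * r + 1)‼ *
    ((-1) ^ i * (2 * r - 2 * i - 1)‼ / (2 * n - 2 * r - 2 * i + 1)‼) *
    (ascPochhammer ℝ (k - 2 * r)).eval ((2 * r - 2 * i + 1 : ℤ) : ℝ)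

theorem piCoeff_ne_zero (n k : ℕ) {r i : ℕ} (hi : i ≤ r) : piCoeff n k r i ≠ 0 := by
  have hsign (m : ℕ) : (-1 : ℝ) ^ m ≠ 0 := pow_ne_zero m (neg_ne_zero.2 one_ne_zero)
  have hfact (m : ℕ) : (m‼ : ℝ) ≠ 0 := Nat.cast_ne_zero.2 (Nat.doubleFactorial_pos m).ne'
  have hrise : (ascPochhammer ℝ (k - 2 * r)).eval ((2 * r - 2 * i + 1 : ℤ) : ℝ) ≠ 0 :=
    (ascPochhammer_pos _ _ (Int.cast_pos.2 (by omega))).ne'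
  exact mul_ne_zero (mul_ne_zero (mul_ne_zero (hsign r) (hfact _))
    (div_ne_zero (mul_ne_zero (hsign i) (hfact _)) (hfact _))) hrise

theorem piElt_eq_sum (n : ℕ) {k r : ℕ} (hr : 2 * r ≤ k) :
    piElt n k r = ∑ i ∈ Finset.range (r + 1), piCoeff n k r i • e k i := by
  have hdegree : (2 * r : ℤ) + (k - 2 * r : ℕ) = k := by omega
  simp only [piElt, piBase, map_smul, map_sum, opL_pow_e, hdegree, Finset.smul_sum, smul_smul,
    piCoeff, mul_assoc]

theorem piElt_sub_mem_span_e (n : ℕ) {k : ℕ} (r : Fin (k / 2 + 1)) :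
    piElt n k r - piCoeff n k r r • e k (r : ℕ) ∈
      span ℝ ((fun p : Fin (k / 2 + 1) => e k (p : ℕ)) '' Iio r) := by
  rw [piElt_eq_sum n (by omega), Finset.sum_range_succ, add_sub_cancel_right]
  refine sum_mem fun i hi => smul_mem _ _ (subset_span ?_)
  have hir : i < r := Finset.mem_range.1 hi
  exact ⟨⟨i, hir.trans r.2⟩, hir, rfl⟩

theorem stmt15 (n k : ℕ) (hk : k ≤ n) :
    LinearIndependent ℝ (fun r : Fin (k / 2 + 1) => piElt n k (r : ℕ)) ∧
    Submodule.span ℝ (Set.range fun r : Fin (k / 2 + 1) => piElt n k (r : ℕ)) =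
      Submodule.span ℝ (Set.range fun p : Fin (k / 2 + 1) => e (k : ℤ) ((p : ℕ) : ℤ)) := by
  have hspan := span_range_eq_of_triangular (fun r => (piCoeff_ne_zero n k le_rfl).isUnit)
    (piElt_sub_mem_span_e n (k := k))
  exact ⟨linearIndependent_of_span_range_eq (linearIndependent_e_fin k) hspan, hspan⟩
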